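/- The denominator polynomial Q(z) = 24 + 18z + 6z^2 + z^3 of the Padé-(1,3) approximant has no zeros in the closed right half-plane: Q(z) ≠ 0 whenever Re(z) ≥ 0. -/

import Mathlib

/-- The denominator `Q(z) = 24 + 18z + 6z² + z³` of the Padé-(1,3) approximant to
`e^{-z}` has no zeros in the closed right half-plane. -/
theorem pade13_denominator_ne_zero (z : ℂ) (hz : 0 ≤ z.re) :
    24 + 18 * z + 6 * z ^ 2 + z ^ 3 ≠ 0 := by
  intro h
  obtain ⟨x, y⟩ := z
  have hx : 0 ≤ x := hz
  have hre := congrArg Complex.re h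
  have him := congrArg Complex.im h
  simp [pow_succ] at hre him
  have h1 : y * (18 + 12 * x + 3 * x ^ 2 - y ^ 2) = 0 := by linear_combination him
  have h2 : 24 + 18 * x + 6 * x ^ 2 + x ^ 3 - (6 + 3 * x) * y ^ 2 = 0 := by
    linear_combination hre
  have hx2 : 0 ≤ x ^ 2 := by positivity
  have hx3 : 0 ≤ x ^ 3 := by positivity
  rcases mul_eq_zero.mp h1 with h0 | h0
  · rw [h0] at h2
    nlinarith
  · have h3 : y ^ 2 = 18 + 12 * x + 3 * x ^ 2 := by linarith
    rw [h3] at h2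
    nlinarith
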